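/- Let n ≥ 2 and let ε = (ε₁, …, εₙ) ∈ ℝⁿ satisfy ε_m > 0 for 2 ≤ m ≤ n and ε₁ < −1 − Σ_{m=2}^n ε_m. For z ∈ ℂⁿ define FS(z) = Γ( i(z₁ + Σ_{m=2}^n z_m) − 1 ) · ( ∏_{m=2}^n Γ(−i z_m) ) / Γ(i z₁ + 1), where Γ is the complex Gamma function. Then for every u ∈ ℝⁿ, ∫_{ℝⁿ} max( e^{y₁} − Σ_{m=2}^n e^{y_m} − 1, 0 ) · e^{⟨y,ε⟩} · e^{−i⟨u,y⟩} dy = FS(u + iε), where u + iε ∈ ℂⁿ has components u_k + i ε_k. -/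

import Mathlib

open MeasureTheory Complex

lemma shear_lemma {X Y : Type*} [MeasurableSpace X] [MeasurableSpace Y] [AddGroup X] [MeasurableAdd₂ X]  [TopologicalSpace X] [OpensMeasurableSpace X] [SecondCountableTopology X]
  [TopologicalSpace Y] [OpensMeasurableSpace Y] [SecondCountableTopology Y] [ContinuousAdd X]
    (μ : Measure X) (ν : Measure Y) [SFinite μ] [SFinite ν] [μ.IsAddRightInvariant]
    (f : X → ℂ) (hf : Continuous f) (hfi : Integrable f μ) (Q : Y → ℂ) (hQ : Continuous Q)
    (hQi : Integrable Q ν) (g : Y → X) (hg : Continuous g) :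
    Integrable (fun p : X × Y => Q p.2 * f (p.1 + g p.2)) (μ.prod ν) ∧
    ∫ p : X × Y, Q p.2 * f (p.1 + g p.2) ∂(μ.prod ν) = (∫ y, Q y ∂ν) * ∫ x, f x ∂μ := by
  have h1 : Integrable (fun p : X × Y => Q p.2 * f (p.1 + g p.2)) (μ.prod ν) := by
    rw [integrable_prod_iff' (Continuous.aestronglyMeasurable (by fun_prop))]
    constructor
    · refine Filter.Eventually.of_forall fun y => ?_
      have := (hfi.comp_add_right (g y)).const_mul (Q y)
      exact this
    · simp only [norm_mul, integral_const_mul]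
      have : ∀ y, ∫ x, ‖f (x + g y)‖ ∂μ = ∫ x, ‖f x‖ ∂μ := fun y =>
        integral_add_right_eq_self (fun x => ‖f x‖) (g y)
      simp only [this]
      exact hQi.norm.mul_const _
  refine ⟨h1, ?_⟩
  rw [integral_prod_symm _ h1]
  simp only [integral_const_mul]
  have : ∀ y, ∫ x, f (x + g y) ∂μ = ∫ x, f x ∂μ := fun y =>
    integral_add_right_eq_self f (g y)
  simp only [this, integral_mul_const]

noncomputable def kk (a : ℂ) (y : ℝ) : ℂ := cexp (a * y - Real.exp y)

lemma kk_cont (a : ℂ) : Continuous (kk a) := by unfold kk; fun_prop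

lemma exp_image : Real.exp '' Set.univ = Set.Ioi 0 := by
  rw [Set.image_univ, Real.range_exp]

lemma kk_eq (a : ℂ) (y : ℝ) : kk a y = |Real.exp y| • (((Real.exp (-(Real.exp y)) : ℝ) : ℂ) * (Real.exp y : ℂ) ^ (a - 1)) := by
  rw [abs_of_pos (Real.exp_pos _), kk, Complex.real_smul, Complex.cpow_def_of_ne_zero (by exact_mod_cast (Real.exp_pos y).ne'), ← Complex.ofReal_log (Real.exp_pos y).le, Real.log_exp]
  push_cast
  rw [← Complex.exp_add, ← Complex.exp_add]
  congr 1
  ring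

lemma kk_int {a : ℂ} (ha : 0 < a.re) : Integrable (kk a) := by
  have h := Complex.GammaIntegral_convergent ha
  rw [← exp_image, integrableOn_image_iff_integrableOn_abs_deriv_smul MeasurableSet.univ
    (fun x _ => (Real.hasDerivAt_exp x).hasDerivWithinAt) Real.exp_injective.injOn, integrableOn_univ] at h
  exact h.congr (Filter.Eventually.of_forall fun y => (kk_eq a y).symm)

lemma kk_val {a : ℂ} (ha : 0 < a.re) : ∫ y, kk a y = Complex.Gamma a := by
  rw [Complex.Gamma_eq_integral ha, Complex.GammaIntegral, ← exp_image, integral_image_eq_integral_abs_deriv_smul MeasurableSet.univ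
    (fun x _ => (Real.hasDerivAt_exp x).hasDerivWithinAt) Real.exp_injective.injOn, setIntegral_univ]
  exact integral_congr_ae (Filter.Eventually.of_forall fun y => kk_eq a y)

noncomputable def hh (w : ℂ) (y : ℝ) : ℂ := ((max (Real.exp y - 1) 0 : ℝ) : ℂ) * cexp (-w * y)

lemma hh_cont (a : ℂ) : Continuous (hh a) := by unfold hh; fun_prop

lemma hh_eq (w : ℂ) : hh w = Set.indicator (Set.Ioi 0) (fun y : ℝ => cexp ((1 - w) * y) - cexp (-w * y)) := by
  ext y
  by_cases hy : 0 < y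
  · rw [Set.indicator_of_mem (by exact hy), hh, max_eq_left (by linarith [Real.add_one_le_exp y])]
    push_cast
    rw [sub_mul, ← Complex.exp_add]
    ring_nf
  · rw [Set.indicator_of_notMem (by exact hy), hh, max_eq_right]
    · simp
    · have := Real.exp_le_one_iff.2 (not_lt.1 hy)
      linarith

lemma hh_int {w : ℂ} (hw : 1 < w.re) : Integrable (hh w) := by
  rw [hh_eq, integrable_indicator_iff measurableSet_Ioi]
  exact (integrableOn_exp_mul_complex_Ioi (by simp; linarith) 0).sub (integrableOn_exp_mul_complex_Ioi (by simp; linarith) 0)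

lemma hh_val {w : ℂ} (hw : 1 < w.re) : ∫ y, hh w y = 1 / (w * (w - 1)) := by
  have h0 : w ≠ 0 := by rintro rfl; norm_num at hw
  have h1 : w - 1 ≠ 0 := by
    intro h; rw [sub_eq_zero] at h; subst h; norm_num at hw
  have h2 : 1 - w ≠ 0 := by rw [← neg_sub]; exact neg_ne_zero.2 h1
  rw [hh_eq, integral_indicator measurableSet_Ioi, integral_sub (integrableOn_exp_mul_complex_Ioi (by simp; linarith) 0) (integrableOn_exp_mul_complex_Ioi (by simp; linarith) 0), integral_exp_mul_complex_Ioi (by simp; linarith), integral_exp_mul_complex_Ioi (by simp; linarith)]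
  simp
  rw [← neg_sub w 1]
  field_simp
  ring

noncomputable def SS {N : ℕ} (y : Fin N → ℝ) : ℝ := (∑ m, Real.exp (y m)) + 1

lemma SS_pos {N : ℕ} (y : Fin N → ℝ) : 0 < SS y := by unfold SS; positivity

lemma logSS_cont (N : ℕ) : Continuous (fun y : Fin N → ℝ => Real.log (SS y)) := by
  refine Continuous.log ?_ (fun y => (SS_pos y).ne')
  unfold SS; fun_prop

noncomputable def QQ {N : ℕ} (w : ℂ) (a : Fin N → ℂ) (y : Fin N → ℝ) : ℂ :=
  cexp (∑ m, a m * y m - (w - 1) * Real.log (SS y))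

lemma QQ_cont {N : ℕ} (w : ℂ) (a : Fin N → ℂ) : Continuous (QQ w a) := by
  have := logSS_cont N
  unfold QQ; fun_prop

lemma key {N : ℕ} (w : ℂ) (a : Fin N → ℂ) (τ : ℝ) (y : Fin N → ℝ) :
    kk (w - 1 - ∑ m, a m) τ * ∏ m, kk (a m) ((y + fun _ => τ : Fin N → ℝ) m) =
      QQ w a y * kk (w - 1) (τ + Real.log (SS y)) := by
  unfold kk QQ
  rw [← Complex.exp_sum, ← Complex.exp_add, ← Complex.exp_add, Real.exp_add τ, Real.exp_log (SS_pos y)]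
  congr 1
  simp only [SS, Pi.add_apply, Real.exp_add]
  push_cast
  simp only [Finset.sum_sub_distrib, mul_add, Finset.sum_add_distrib, ← Finset.sum_mul, ← Complex.ofReal_exp]
  ring

lemma QQ_facts {N : ℕ} (w : ℂ) (a : Fin N → ℂ) (ha : ∀ m, 0 < (a m).re) (hw : 1 < w.re)
    (hb : 0 < (w - 1 - ∑ m, a m).re) : Integrable (QQ w a) ∧
    ∫ y, QQ w a y = Gamma (w - 1 - ∑ m, a m) * (∏ m, Gamma (a m)) / Gamma (w - 1) := by
  have hw1 : 0 < (w - 1).re := by simpa using hw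
  have hG : Gamma (w - 1) ≠ 0 := Complex.Gamma_ne_zero_of_re_pos hw1
  have hP : Integrable (fun y : Fin N → ℝ => ∏ m, kk (a m) (y m)) :=
    Integrable.fintype_prod (f := fun m => kk (a m)) (fun m => kk_int (ha m))
  have hPc : Continuous (fun y : Fin N → ℝ => ∏ m, kk (a m) (y m)) := by
    have := fun m => kk_cont (a m)
    fun_prop
  obtain ⟨h1, h2⟩ := shear_lemma volume volume _ hPc hP _ (kk_cont (w - 1 - ∑ m, a m)) (kk_int hb)
    (fun τ : ℝ => (fun _ : Fin N => τ)) (by fun_prop)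
  simp only [key w a] at h1 h2
  have h3 := h1.integral_prod_left
  have h4 := integral_prod _ h1
  rw [h2] at h4
  have h5 : ∀ y : Fin N → ℝ, ∫ x : ℝ, kk (w - 1) (x + Real.log (SS y)) = Gamma (w - 1) := fun y => by
    rw [integral_add_right_eq_self (kk (w - 1)), kk_val hw1]
  simp only [integral_const_mul, h5, integral_mul_const] at h3 h4
  rw [integral_fintype_prod_volume_eq_prod (fun m => kk (a m)), kk_val hb] at h4
  simp only [kk_val (ha _)] at h4
  constructor
  · exact (integrable_mul_const_iff (isUnit_iff_ne_zero.2 hG) _).1 h3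
  · rw [h4]; field_simp

lemma key2 {N : ℕ} (w : ℂ) (a : Fin N → ℂ) (x : ℝ) (y : Fin N → ℝ) :
    QQ w a y * hh w (x + -Real.log (SS y)) =
    ((max (Real.exp x - (∑ m, Real.exp (y m)) - 1) 0 : ℝ) : ℂ) * cexp (-w * x + ∑ m, a m * y m) := by
  have hS := SS_pos y
  have : max (Real.exp x - (∑ m, Real.exp (y m)) - 1) 0 = Real.exp (Real.log (SS y)) * max (Real.exp (x + -Real.log (SS y)) - 1) 0 := by
    rw [mul_max_of_nonneg _ _ (Real.exp_pos _).le, mul_zero, mul_sub, ← Real.exp_add,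
      add_comm x, add_neg_cancel_left, Real.exp_log hS, SS]
    ring_nf
  rw [this, hh, QQ, mul_left_comm, ← Complex.exp_add, Complex.ofReal_mul, Complex.ofReal_exp,
    mul_comm (cexp _), mul_assoc, ← Complex.exp_add]
  congr 2
  push_cast
  ring

lemma main_aux {N : ℕ} (w : ℂ) (a : Fin N → ℂ) (ha : ∀ m, 0 < (a m).re) (hw : 1 < w.re)
    (hb : 0 < (w - 1 - ∑ m, a m).re) :
    ∫ y : Fin (N + 1) → ℝ, ((max (Real.exp (y 0) - (∑ m : Fin N, Real.exp (y m.succ)) - 1) 0 : ℝ) : ℂ) * cexp (-w * y 0 + ∑ m, a m * y (Fin.succ m)) =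
    Gamma (w - 1 - ∑ m, a m) * (∏ m, Gamma (a m)) / Gamma (w + 1) := by
  obtain ⟨hQ1, hQ2⟩ := QQ_facts w a ha hw hb
  obtain ⟨-, h2⟩ := shear_lemma volume volume _ (hh_cont w) (hh_int hw) _ (QQ_cont w a) hQ1
    (fun y => -Real.log (SS y)) (logSS_cont N).neg
  have h0 : w ≠ 0 := by rintro rfl; norm_num at hw
  have h1 : w - 1 ≠ 0 := by
    intro h; rw [sub_eq_zero] at h; subst h; norm_num at hw
  have e : Gamma (w + 1) = w * ((w - 1) * Gamma (w - 1)) := by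
    rw [Complex.Gamma_add_one w h0, ← Complex.Gamma_add_one _ h1, sub_add_cancel]
  simp only [key2, hh_val hw, hQ2] at h2
  rw [← Measure.volume_eq_prod, ← (volume_preserving_piFinSuccAbove (fun _ : Fin (N + 1) => ℝ) 0).integral_comp'] at h2
  simp only [MeasurableEquiv.piFinSuccAbove_apply, Fin.insertNthEquiv_symm_apply, Fin.removeNth_apply, Fin.zero_succAbove] at h2
  rw [e]
  refine h2.trans ?_
  field_simp

theorem payoff_fourier_transform_eq_FS
    (n : ℕ) (hn : 2 ≤ n) (i₀ : Fin n) (hi₀ : (i₀ : ℕ) = 0)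
    (ε : Fin n → ℝ) (hε : ∀ m, m ≠ i₀ → 0 < ε m)
    (hε1 : ε i₀ < -1 - ∑ m ∈ Finset.Ioi i₀, ε m)
    (FS : (Fin n → ℂ) → ℂ)
    (hFS : ∀ z : Fin n → ℂ, FS z =
      Complex.Gamma (Complex.I * (z i₀ + ∑ m ∈ Finset.Ioi i₀, z m) - 1) *
        (∏ m ∈ Finset.Ioi i₀, Complex.Gamma (-Complex.I * z m)) /
        Complex.Gamma (Complex.I * z i₀ + 1)) :
    ∀ u : Fin n → ℝ,
      (∫ y : Fin n → ℝ,
          ((max (Real.exp (y i₀) - (∑ m ∈ Finset.Ioi i₀, Real.exp (y m)) - 1) 0 : ℝ) : ℂ) *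
            (Real.exp (∑ k, y k * ε k) : ℂ) *
            Complex.exp (-Complex.I * (∑ k, u k * y k : ℝ)))
        = FS (fun k => (u k : ℂ) + Complex.I * (ε k : ℂ)) := by
  intro u
  obtain ⟨N, rfl⟩ : ∃ N, n = N + 1 := ⟨n - 1, by omega⟩
  obtain rfl : i₀ = 0 := Fin.ext (by simpa using hi₀)
  rw [hFS]
  simp only [Fin.sum_Ioi_zero, Fin.prod_Ioi_zero] at hε1 ⊢
  have hpos : ∀ m : Fin N, 0 < ε m.succ := fun m => hε _ (Fin.succ_ne_zero m)
  have hsum : 0 ≤ ∑ m : Fin N, ε m.succ := Finset.sum_nonneg fun m _ => (hpos m).le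
  have := main_aux (N := N) (I * (u 0 + I * ε 0)) (fun m => -I * (u m.succ + I * ε m.succ))
    (fun m => by simpa using hpos m) (by simp; linarith) (by simp; linarith)
  have e : I * (u 0 + I * ε 0) - 1 - ∑ m : Fin N, -I * (u m.succ + I * ε m.succ) =
      I * (u 0 + I * ε 0 + ∑ m : Fin N, ((u m.succ : ℂ) + I * ε m.succ)) - 1 := by
    rw [← Finset.mul_sum]; ring
  rw [e] at this
  rw [← this]
  congr 1
  ext y
  rw [mul_assoc, Complex.ofReal_exp, ← Complex.exp_add]
  congr 2
  rw [Fin.sum_univ_succ, Fin.sum_univ_succ]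
  push_cast
  have e2 : ∀ m : Fin N, -I * (u m.succ + I * ε m.succ) * (y m.succ : ℂ) =
      y m.succ * ε m.succ + -I * (u m.succ * y m.succ) := fun m => by
    linear_combination (-(ε m.succ : ℂ) * y m.succ) * I_mul_I
  simp only [e2, Finset.sum_add_distrib, ← Finset.mul_sum]
  linear_combination (-(ε 0 : ℂ) * y 0) * (-I_mul_I)
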